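/- Let V be a 2-VASS with n control states and norm M, and let S be a strongly connected component of V such that the effects of all cycles within S lie in a closed half-plane containing no positive vector, and such that no simple cycle within S has vertical or horizontal effect. Then every run ρ of V whose control states all lie within S satisfies ‖trg(ρ)‖ ≤ (‖src(ρ)‖ + (n−1)·M)·(1 + n·M). -/

import Mathlib

/-- Integer vectors in the plane. -/
abbrev Vec2 : Type := ℤ × ℤ

/-- The norm of a vector: the maximum of the absolute values of its coordinates. -/
def vnorm (v : Vec2) : ℕ := max v.1.natAbs v.2.natAbs

/-- A vector is positive if both coordinates are positive. -/
def Pos (v : Vec2) : Prop := 0 < v.1 ∧ 0 < v.2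

/-- A vector is semi-positive if both coordinates are nonnegative and one is positive. -/
def SemiPos (v : Vec2) : Prop := 0 ≤ v.1 ∧ 0 ≤ v.2 ∧ (0 < v.1 ∨ 0 < v.2)

/-- A vector is vertical if it is of the form (0, a) with a > 0. -/
def Vert (v : Vec2) : Prop := v.1 = 0 ∧ 0 < v.2

/-- A vector is horizontal if it is of the form (a, 0) with a > 0. -/
def Horiz (v : Vec2) : Prop := 0 < v.1 ∧ v.2 = 0

/-- Embedding of integer vectors into the rational plane. -/
def toQ (v : Vec2) : ℚ × ℚ := ((v.1 : ℚ), (v.2 : ℚ))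

/-- The half-line (ray) ℚ≥0 · x generated by a rational vector x. -/
def rayQ (x : ℚ × ℚ) : Set (ℚ × ℚ) := {z | ∃ a : ℚ, 0 ≤ a ∧ z = a • x}

/-- The cone of a finite list of integer vectors: all nonnegative rational
linear combinations. -/
def Cone (vs : List Vec2) : Set (ℚ × ℚ) :=
  {x | ∃ a : Fin vs.length → ℚ, (∀ i, 0 ≤ a i) ∧ x = ∑ i, a i • toQ (vs.get i)}

/-- The sequential cone: nonnegative rational combinations all of whose
partial sums are in the nonnegative orthant. -/
def SeqCone (vs : List Vec2) : Set (ℚ × ℚ) :=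
  {x | ∃ a : Fin vs.length → ℚ, (∀ i, 0 ≤ a i) ∧
    (∀ k : ℕ, k ≤ vs.length →
      0 ≤ ∑ i : Fin vs.length, if (i : ℕ) < k then a i • toQ (vs.get i) else 0) ∧
    x = ∑ i, a i • toQ (vs.get i)}

/-- Two integer vectors are colinear if they generate the same half-line. -/
def Colinear (v w : Vec2) : Prop := rayQ (toQ v) = rayQ (toQ w)

/-- The clockwise relation on nonnegative vectors:
`Clk v u` iff u lies strictly clockwise from v. -/
def Clk (v u : Vec2) : Prop := 0 < v.2 * u.1 - v.1 * u.2

/-- Projection of a vector on coordinate `j` (`Fin 2` indexes the two coordinates). -/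
def proj (j : Fin 2) (v : Vec2) : ℤ := if j = 0 then v.1 else v.2

/-! ### 2-dimensional vector addition systems with states (2-VASS) -/

/-- A transition of a 2-VASS with control states `Fin n`:
a source state, an effect vector, and a target state. -/
abbrev Transition (n : ℕ) : Type := Fin n × Vec2 × Fin n

/-- A 2-VASS with control states `Fin n` is a finite set of transitions. -/
abbrev VASS (n : ℕ) : Type := Finset (Transition n)

/-- The norm of a 2-VASS: the largest norm of an effect of a transition. -/
def vassNorm {n : ℕ} (V : VASS n) : ℕ := V.sup (fun t => vnorm t.2.1)

/-- The effect of a sequence of transitions: the sum of the individual effects. -/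
def effect {n : ℕ} (π : List (Transition n)) : Vec2 := (π.map (fun t => t.2.1)).sum

/-- A path of `V`: a sequence of transitions of `V` in which
consecutive control states match. -/
def IsPath {n : ℕ} (V : VASS n) (π : List (Transition n)) : Prop :=
  (∀ t ∈ π, t ∈ V) ∧ π.Chain' (fun s t => s.2.2 = t.1)

/-- The path `π` starts at control state `q` (vacuously true for the empty path). -/
def startsAt {n : ℕ} (π : List (Transition n)) (q : Fin n) : Prop :=
  ∀ t ∈ π.head?, t.1 = q

/-- The control state after the first `i` transitions of `π`, for a path
starting at control state `q`. -/
def stateAt {n : ℕ} (π : List (Transition n)) (q : Fin n) (i : ℕ) : Fin n :=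
  (((π.take i).getLast?).map (fun t => t.2.2)).getD q

/-- The final control state of a path `π` starting at control state `q`. -/
def endState {n : ℕ} (π : List (Transition n)) (q : Fin n) : Fin n := stateAt π q π.length

/-- The counter values after the first `i` transitions of `π`, starting from
counter values `u`. -/
def vecAt {n : ℕ} (π : List (Transition n)) (u : Vec2) (i : ℕ) : Vec2 :=
  u + effect (π.take i)

/-- The path `π` is enabled in the configuration `(q, u)`: it starts at `q`
and all intermediate counter values are nonnegative. -/
def Enabled {n : ℕ} (π : List (Transition n)) (q : Fin n) (u : Vec2) : Prop :=
  startsAt π q ∧ ∀ i ≤ π.length, 0 ≤ vecAt π u i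

/-- For `j ∈ {1,2}`, the path `π` is `{j}`-enabled in the configuration `(q, u)`:
it starts at `q` and the `j`-th coordinate of all intermediate counter values is
nonnegative. -/
def JEnabled {n : ℕ} (π : List (Transition n)) (q : Fin n) (u : Vec2) (j : Fin 2) : Prop :=
  startsAt π q ∧ ∀ i ≤ π.length, 0 ≤ proj j (vecAt π u i)

/-- A run of `V`: a path of `V` enabled in the configuration `(q, u)`.
Its source is `(q, u)`, its target is `(endState π q, vecAt π u π.length)`,
and its configurations are `(stateAt π q i, vecAt π u i)` for `i ≤ π.length`. -/
def IsRun {n : ℕ} (V : VASS n) (π : List (Transition n)) (q : Fin n) (u : Vec2) : Prop :=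
  IsPath V π ∧ Enabled π q u

/-- A (0,0)-run of `V`: a run whose source and target counter values are `(0,0)`. -/
def IsZeroRun {n : ℕ} (V : VASS n) (π : List (Transition n)) (q : Fin n) : Prop :=
  IsRun V π q 0 ∧ effect π = 0

/-- A cycle of `V`: a nonempty path of `V` whose starting and ending control
states coincide. -/
def IsCycle {n : ℕ} (V : VASS n) (γ : List (Transition n)) : Prop :=
  IsPath V γ ∧ γ ≠ [] ∧ γ.head?.map (fun t => t.1) = γ.getLast?.map (fun t => t.2.2)

/-- Reachability in the directed graph of `V`: there is a path of `V`
from `p` to `q` (possibly empty). -/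
def Reach {n : ℕ} (V : VASS n) (p q : Fin n) : Prop :=
  ∃ π : List (Transition n), IsPath V π ∧ startsAt π p ∧ endState π p = q

/-- `S` is a strongly connected component of the directed graph of `V`:
it is nonempty, all its states are mutually reachable, and it is maximal
with this property. -/
def IsSCC {n : ℕ} (V : VASS n) (S : Set (Fin n)) : Prop :=
  S.Nonempty ∧ (∀ p ∈ S, ∀ q ∈ S, Reach V p q) ∧
  (∀ p ∈ S, ∀ q : Fin n, Reach V p q → Reach V q p → q ∈ S)

/-- All control states occurring in the sequence of transitions `γ` belong to `S`. -/
def WithinS {n : ℕ} (S : Set (Fin n)) (γ : List (Transition n)) : Prop :=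
  ∀ t ∈ γ, t.1 ∈ S ∧ t.2.2 ∈ S

/-- A simple cycle: a cycle in which no control state repeats, except that the
first state equals the last. -/
def IsSimpleCycle {n : ℕ} (V : VASS n) (γ : List (Transition n)) : Prop :=
  IsCycle V γ ∧ (γ.map (fun t => t.1)).Nodup

/-- `Walk p a b`: consecutive control states of `p` match, and `p` leads from `a` to `b`. -/
def Walk {n : ℕ} : List (Transition n) → Fin n → Fin n → Prop
  | [], a, b => a = b
  | t :: p, a, b => t.1 = a ∧ Walk p t.2.2 b

/-- The control states visited by a walk `p` that ends in `b`. -/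
def visited {n : ℕ} (p : List (Transition n)) (b : Fin n) : List (Fin n) :=
  p.map (fun t => t.1) ++ [b]

theorem Walk.start_mem_visited {n : ℕ} {p : List (Transition n)} {a b : Fin n}
    (h : Walk p a b) : a ∈ visited p b := by
  cases p with
  | nil =>
    have hab : a = b := h
    simp [visited, hab]
  | cons t p => simp [visited, h.1]

theorem Walk.exists_split {n : ℕ} {p : List (Transition n)} {a b c : Fin n}
    (h : Walk p a b) (hc : c ∈ visited p b) :
    ∃ p₁ p₂, p = p₁ ++ p₂ ∧ Walk p₁ a c ∧ Walk p₂ c b := by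
  induction p generalizing a with
  | nil =>
    have hcb : c = b := by simpa [visited] using hc
    have hab : a = b := h
    subst hcb
    exact ⟨[], [], rfl, hab, rfl⟩
  | cons t p ih =>
    by_cases hca : c = a
    · subst hca
      exact ⟨[], t :: p, rfl, rfl, h⟩
    · have hc' : c ∈ visited p b := by
        have := h.1
        simp only [visited, List.map_cons, List.cons_append, List.mem_cons] at hc ⊢
        rcases hc with hc | hc
        · exact absurd (hc.trans this) hca
        · exact hc
      obtain ⟨p₁, p₂, rfl, h₁, h₂⟩ := ih h.2 hc'
      exact ⟨t :: p₁, p₂, rfl, ⟨h.1, h₁⟩, h₂⟩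

theorem Walk.isChain {n : ℕ} {p : List (Transition n)} {a b : Fin n} (h : Walk p a b) :
    p.IsChain (fun s t => s.2.2 = t.1) := by
  induction p generalizing a with
  | nil => exact List.IsChain.nil
  | cons t p ih =>
    cases p with
    | nil => exact List.IsChain.singleton t
    | cons s p => exact List.IsChain.cons_cons h.2.1.symm (ih h.2)

theorem Walk.getLast_target {n : ℕ} {p : List (Transition n)} {a b : Fin n}
    (h : Walk p a b) (hp : p ≠ []) : p.getLast?.map (fun t => t.2.2) = some b := by
  induction p generalizing a with
  | nil => exact absurd rfl hp
  | cons t p ih =>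
    cases p with
    | nil =>
      have : t.2.2 = b := h.2
      simp [this]
    | cons s p =>
      rw [List.getLast?_cons_cons]
      exact ih h.2 (by simp)

theorem Walk.isCycle {n : ℕ} {V : VASS n} {p : List (Transition n)} {a : Fin n}
    (h : Walk p a a) (hp : p ≠ []) (hV : ∀ t ∈ p, t ∈ V) : IsCycle V p := by
  refine ⟨⟨hV, h.isChain⟩, hp, ?_⟩
  rw [h.getLast_target hp]
  cases p with
  | nil => exact absurd rfl hp
  | cons t p => simp [h.1]

theorem effect_cons {n : ℕ} (t : Transition n) (p : List (Transition n)) :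
    effect (t :: p) = t.2.1 + effect p := by
  simp [effect]

theorem effect_append {n : ℕ} (p₁ p₂ : List (Transition n)) :
    effect (p₁ ++ p₂) = effect p₁ + effect p₂ := by
  simp [effect]

/-- Every walk decomposes, up to reordering, into simple cycles and a walk without
repeated control states. -/
theorem Walk.exists_decomposition {n : ℕ} {V : VASS n} {S : Set (Fin n)}
    {p : List (Transition n)} {a b : Fin n} (h : Walk p a b) (hV : ∀ t ∈ p, t ∈ V)
    (hS : WithinS S p) :
    ∃ (r : List (Transition n)) (cs : List (List (Transition n))),
      Walk r a b ∧ (visited r b).Nodup ∧ (∀ t ∈ r, t ∈ V) ∧ WithinS S r ∧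
      (∀ γ ∈ cs, IsSimpleCycle V γ ∧ WithinS S γ) ∧
      effect p = effect r + (cs.map effect).sum := by
  induction p generalizing a with
  | nil => exact ⟨[], [], h, by simp [visited], by simp, by simp [WithinS], by simp, by simp⟩
  | cons t p ih =>
    obtain ⟨r, cs, hr, hnd, hrV, hrS, hcs, heff⟩ :=
      ih h.2 (fun s hs => hV s (List.mem_cons_of_mem _ hs))
        (fun s hs => hS s (List.mem_cons_of_mem _ hs))
    have htV := hV t List.mem_cons_self
    have htS := hS t List.mem_cons_self
    by_cases hmem : t.1 ∈ visited r b
    · obtain ⟨r₁, r₂, rfl, h₁, h₂⟩ := hr.exists_split hmem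
      have hsplit : visited (r₁ ++ r₂) b = r₁.map (fun t => t.1) ++ visited r₂ b := by
        simp [visited]
      rw [hsplit, List.nodup_append] at hnd
      obtain ⟨hnd₁, hnd₂, hdisj⟩ := hnd
      have hcyc : IsSimpleCycle V (t :: r₁) := by
        refine ⟨Walk.isCycle (a := t.1) ⟨rfl, h₁⟩ (by simp) ?_, ?_⟩
        · intro s hs
          rcases List.mem_cons.1 hs with rfl | hs
          · exact htV
          · exact hrV s (List.mem_append_left _ hs)
        · rw [List.map_cons, List.nodup_cons]
          exact ⟨fun hm => hdisj _ hm _ h₂.start_mem_visited rfl, hnd₁⟩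
      have hcycS : WithinS S (t :: r₁) := by
        intro s hs
        rcases List.mem_cons.1 hs with rfl | hs
        · exact htS
        · exact hrS s (List.mem_append_left _ hs)
      refine ⟨r₂, (t :: r₁) :: cs, h.1 ▸ h₂, hnd₂,
        fun s hs => hrV s (List.mem_append_right _ hs),
        fun s hs => hrS s (List.mem_append_right _ hs), ?_, ?_⟩
      · intro γ hγ
        rcases List.mem_cons.1 hγ with rfl | hγ
        · exact ⟨hcyc, hcycS⟩
        · exact hcs γ hγ
      · rw [effect_cons, heff, effect_append, List.map_cons, List.sum_cons, effect_cons]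
        abel
    · refine ⟨t :: r, cs, ⟨h.1, hr⟩, ?_, ?_, ?_, hcs, ?_⟩
      · exact List.nodup_cons.2 ⟨hmem, hnd⟩
      · intro s hs
        rcases List.mem_cons.1 hs with rfl | hs
        · exact htV
        · exact hrV s hs
      · intro s hs
        rcases List.mem_cons.1 hs with rfl | hs
        · exact htS
        · exact hrS s hs
      · rw [effect_cons, heff, effect_cons, add_assoc]

theorem stateAt_cons_succ {n : ℕ} (t : Transition n) (p : List (Transition n)) (q : Fin n)
    (i : ℕ) : stateAt (t :: p) q (i + 1) = stateAt p t.2.2 i := by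
  simp only [stateAt, List.take_succ_cons, List.getLast?_cons]
  cases (p.take i).getLast? <;> simp

theorem walk_of_isPath {n : ℕ} {V : VASS n} {S : Set (Fin n)} {p : List (Transition n)}
    {q : Fin n} (hp : IsPath V p) (hq : startsAt p q)
    (hin : ∀ i ≤ p.length, stateAt p q i ∈ S) :
    Walk p q (endState p q) ∧ WithinS S p := by
  induction p generalizing q with
  | nil => exact ⟨rfl, by simp [WithinS]⟩
  | cons t p ih =>
    have ht : t.1 = q := hq t (by simp)
    have hchain : (t :: p).IsChain (fun s t => s.2.2 = t.1) := hp.2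
    have hstart : startsAt p t.2.2 := by
      intro s hs
      exact ((List.isChain_cons.1 hchain).1 s hs).symm
    have hin' : ∀ i ≤ p.length, stateAt p t.2.2 i ∈ S := by
      intro i hi
      have := hin (i + 1) (by simpa using hi)
      rwa [stateAt_cons_succ] at this
    obtain ⟨hwalk, hwithin⟩ :=
      ih ⟨fun s hs => hp.1 s (List.mem_cons_of_mem _ hs), (List.isChain_cons.1 hchain).2⟩
        hstart hin'
    have hend : endState (t :: p) q = endState p t.2.2 := stateAt_cons_succ t p q p.length
    refine ⟨⟨ht, hend ▸ hwalk⟩, ?_⟩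
    intro s hs
    rcases List.mem_cons.1 hs with rfl | hs
    · refine ⟨?_, ?_⟩
      · have := hin 0 (Nat.zero_le _)
        rw [ht]
        simpa [stateAt] using this
      · simpa [stateAt] using hin' 0 (Nat.zero_le _)
    · exact hwithin s hs

theorem vnorm_add_le (v w : Vec2) : vnorm (v + w) ≤ vnorm v + vnorm w := by
  simp only [vnorm, Prod.fst_add, Prod.snd_add]
  omega

theorem vnorm_effect_le {n : ℕ} {V : VASS n} {p : List (Transition n)}
    (hV : ∀ t ∈ p, t ∈ V) : vnorm (effect p) ≤ p.length * vassNorm V := by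
  induction p with
  | nil => simp [effect, vnorm]
  | cons t p ih =>
    have h₁ : vnorm t.2.1 ≤ vassNorm V :=
      Finset.le_sup (f := fun t : Transition n => vnorm t.2.1) (hV t List.mem_cons_self)
    have h₂ := ih (fun s hs => hV s (List.mem_cons_of_mem _ hs))
    have h₃ := vnorm_add_le t.2.1 (effect p)
    rw [effect_cons, List.length_cons, Nat.succ_mul]
    omega

theorem linear_sum_map_nonpos {ι : Type*} {L : List ι} {f g : ι → ℤ} {a b : ℚ}
    (h : ∀ c ∈ L, a * f c + b * g c ≤ 0) :
    a * ((L.map f).sum : ℤ) + b * ((L.map g).sum : ℤ) ≤ 0 := by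
  induction L with
  | nil => simp
  | cons c L ih =>
    have h₁ := h c List.mem_cons_self
    have h₂ := ih (fun d hd => h d (List.mem_cons_of_mem _ hd))
    simp only [List.map_cons, List.sum_cons, Int.cast_add]
    linarith

/-- If plane vectors `(f c, g c)` of norm at most `N` lie in a half-plane with no positive
vector and none of them is vertical, a lower bound on the sum of the first coordinates
yields an upper bound on the sum of the second ones. -/
theorem sum_map_le_of_halfPlane {ι : Type*} {L : List ι} {f g : ι → ℤ} {a b : ℚ} {N K : ℤ}
    (ha : 0 ≤ a) (hb : 0 ≤ b) (hab : a ≠ 0 ∨ b ≠ 0)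
    (hhalf : ∀ c ∈ L, a * f c + b * g c ≤ 0)
    (hN : ∀ c ∈ L, |g c| ≤ N) (hN0 : 0 ≤ N) (hK0 : 0 ≤ K)
    (hvert : ∀ c ∈ L, f c = 0 → g c ≤ 0) (hK : -K ≤ (L.map f).sum) :
    (L.map g).sum ≤ K * N := by
  by_cases hpos : ∃ c ∈ L, 0 < f c
  · obtain ⟨c, hc, hfc⟩ := hpos
    have hf : (1 : ℚ) ≤ f c := by exact_mod_cast hfc
    have hg : -(N : ℚ) ≤ g c := by exact_mod_cast (abs_le.1 (hN c hc)).1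
    have hcle := hhalf c hc
    have hb0 : 0 < b := by
      rcases hb.lt_or_eq with hb | rfl
      · exact hb
      · have : a ≠ 0 := by simpa using hab
        have ha0 : 0 < a := lt_of_le_of_ne ha this.symm
        nlinarith
    have haN : a ≤ b * N := by nlinarith
    have hsum := linear_sum_map_nonpos hhalf
    have hKq : -(K : ℚ) ≤ ((L.map f).sum : ℤ) := by exact_mod_cast hK
    have hK0q : (0 : ℚ) ≤ K := by exact_mod_cast hK0
    have h₁ : a * K ≤ b * N * K := mul_le_mul_of_nonneg_right haN hK0q
    have h₂ : a * -(K : ℚ) ≤ a * ((L.map f).sum : ℤ) := mul_le_mul_of_nonneg_left hKq ha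
    have h₃ : b * ((L.map g).sum : ℤ) ≤ b * (K * N : ℚ) := by linarith
    exact_mod_cast le_of_mul_le_mul_left h₃ hb0
  · push Not at hpos
    have hlin : ∀ c ∈ L, (N : ℚ) * f c + 1 * g c ≤ 0 := by
      intro c hc
      have hgN := (abs_le.1 (hN c hc)).2
      have : N * f c + g c ≤ 0 := by
        rcases (hpos c hc).lt_or_eq with hlt | heq
        · nlinarith
        · simpa [heq] using hvert c hc heq
      rw [one_mul]
      exact_mod_cast this
    have hsum := linear_sum_map_nonpos hlin
    rw [one_mul] at hsum
    have hsum' : N * (L.map f).sum + (L.map g).sum ≤ 0 := by exact_mod_cast hsum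
    nlinarith

theorem halfPlane_normal_nonpos {w : ℚ × ℚ}
    (h : ∀ x : ℚ × ℚ, 0 < x.1 → 0 < x.2 → ¬ (0 ≤ w.1 * x.1 + w.2 * x.2)) :
    w.1 ≤ 0 ∧ w.2 ≤ 0 := by
  constructor
  · by_contra! hpos
    refine h (1 + |w.2| / w.1, 1) (by positivity) one_pos ?_
    have : w.1 * (1 + |w.2| / w.1) = w.1 + |w.2| := by field_simp
    simp only [this, mul_one]
    linarith [neg_abs_le w.2]
  · by_contra! hpos
    refine h (1, 1 + |w.1| / w.2) one_pos (by positivity) ?_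
    have : w.2 * (1 + |w.1| / w.2) = w.2 + |w.1| := by field_simp
    simp only [this, mul_one]
    linarith [neg_abs_le w.1]

theorem fst_sum_map {ι : Type*} (L : List ι) (f : ι → Vec2) :
    (L.map f).sum.1 = (L.map (fun c => (f c).1)).sum := by
  induction L with
  | nil => rfl
  | cons c L ih => simp [ih]

theorem snd_sum_map {ι : Type*} (L : List ι) (f : ι → Vec2) :
    (L.map f).sum.2 = (L.map (fun c => (f c).2)).sum := by
  induction L with
  | nil => rfl
  | cons c L ih => simp [ih]

/-- Let `S` be an SCC of a 2-VASS `V` (with `n` states and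
norm `M`) such that the effects of all cycles within `S` lie in a closed
half-plane containing no positive vector, and no simple cycle within `S` has
vertical or horizontal effect.  Then every run within `S` satisfies
`‖trg‖ ≤ (‖src‖ + (n−1)·M)·(1 + n·M)`. -/
theorem scc_halfplane_bounded
    (n : ℕ) (V : VASS n) (S : Set (Fin n)) (hS : IsSCC V S)
    (w : ℚ × ℚ) (hw : w ≠ 0)
    (hnopos : ∀ x : ℚ × ℚ, 0 < x.1 → 0 < x.2 → ¬ (0 ≤ w.1 * x.1 + w.2 * x.2))
    (hcycles : ∀ γ : List (Transition n), IsCycle V γ → WithinS S γ →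
      0 ≤ w.1 * ((effect γ).1 : ℚ) + w.2 * ((effect γ).2 : ℚ))
    (hnosimple : ¬ ∃ γ : List (Transition n), IsSimpleCycle V γ ∧ WithinS S γ ∧
      (Vert (effect γ) ∨ Horiz (effect γ)))
    (π : List (Transition n)) (q : Fin n) (u : Vec2)
    (hrun : IsRun V π q u)
    (hin : ∀ i ≤ π.length, stateAt π q i ∈ S) :
    vnorm (vecAt π u π.length) ≤
      (vnorm u + (n - 1) * vassNorm V) * (1 + n * vassNorm V) := by
  obtain ⟨hw₁, hw₂⟩ := halfPlane_normal_nonpos hnopos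
  have hw' : -w.1 ≠ 0 ∨ -w.2 ≠ 0 := by
    by_contra! h
    exact hw (Prod.ext (neg_eq_zero.1 h.1) (neg_eq_zero.1 h.2))
  obtain ⟨hpath, hstart, hnonneg⟩ := hrun
  obtain ⟨hwalk, hwithin⟩ := walk_of_isPath hpath hstart hin
  obtain ⟨r, cs, -, hnd, hrV, -, hcs, heff⟩ := hwalk.exists_decomposition hpath.1 hwithin
  have hrlen : r.length ≤ n - 1 := by
    have := hnd.length_le_card
    simp only [visited, List.length_append, List.length_map, List.length_singleton,
      Fintype.card_fin] at this
    omega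
  have hlen : ∀ γ ∈ cs, γ.length ≤ n := fun γ hγ => by
    simpa using (hcs γ hγ).1.2.length_le_card
  have hcsN : ∀ γ ∈ cs, vnorm (effect γ) ≤ n * vassNorm V := fun γ hγ =>
    (vnorm_effect_le (hcs γ hγ).1.1.1.1).trans (Nat.mul_le_mul_right _ (hlen γ hγ))
  have hr : vnorm (effect r) ≤ (n - 1) * vassNorm V :=
    (vnorm_effect_le hrV).trans (Nat.mul_le_mul_right _ hrlen)
  have hfinal : vecAt π u π.length = u + effect r + (cs.map effect).sum := by
    rw [vecAt, List.take_length, heff, add_assoc]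
  have hfinal₀ := hnonneg π.length le_rfl
  have hbase := vnorm_add_le u (effect r)
  rw [hfinal] at hfinal₀ ⊢
  generalize hK : vnorm u + (n - 1) * vassNorm V = K
  generalize hN : n * vassNorm V = N at hcsN ⊢
  have hbaseK : vnorm (u + effect r) ≤ K := by omega
  generalize u + effect r = v at hbaseK hfinal₀ ⊢
  have hfinal₁ : 0 ≤ v.1 + (cs.map effect).sum.1 := hfinal₀.1
  have hfinal₂ : 0 ≤ v.2 + (cs.map effect).sum.2 := hfinal₀.2
  have hhalf : ∀ γ ∈ cs, -w.1 * (effect γ).1 + -w.2 * (effect γ).2 ≤ 0 := fun γ hγ => by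
    linarith [hcycles γ (hcs γ hγ).1.1 (hcs γ hγ).2]
  have hsnd : (cs.map effect).sum.2 ≤ (K : ℤ) * N := by
    rw [snd_sum_map]
    refine sum_map_le_of_halfPlane (f := fun γ => (effect γ).1) (neg_nonneg.2 hw₁)
      (neg_nonneg.2 hw₂) hw' hhalf ?_ (by positivity) (by positivity) ?_ ?_
    · intro γ hγ
      have := hcsN γ hγ
      simp only [vnorm] at this
      rw [Int.abs_eq_natAbs]
      omega
    · intro γ hγ h0
      by_contra! hlt
      exact hnosimple ⟨γ, (hcs γ hγ).1, (hcs γ hγ).2, Or.inl ⟨h0, hlt⟩⟩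
    · rw [← fst_sum_map]
      simp only [vnorm] at hbaseK
      omega
  have hfst : (cs.map effect).sum.1 ≤ (K : ℤ) * N := by
    rw [fst_sum_map]
    refine sum_map_le_of_halfPlane (f := fun γ => (effect γ).2) (neg_nonneg.2 hw₂)
      (neg_nonneg.2 hw₁) hw'.symm (fun γ hγ => (add_comm _ _).trans_le (hhalf γ hγ)) ?_
      (by positivity) (by positivity) ?_ ?_
    · intro γ hγ
      have := hcsN γ hγ
      simp only [vnorm] at this
      rw [Int.abs_eq_natAbs]
      omega
    · intro γ hγ h0
      by_contra! hlt
      exact hnosimple ⟨γ, (hcs γ hγ).1, (hcs γ hγ).2, Or.inr ⟨hlt, h0⟩⟩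
    · rw [← snd_sum_map]
      simp only [vnorm] at hbaseK
      omega
  rw [mul_add, mul_one]
  have hcast : ((K * N : ℕ) : ℤ) = (K : ℤ) * N := by push_cast; rfl
  rw [← hcast] at hfst hsnd
  simp only [vnorm, Prod.fst_add, Prod.snd_add] at hbaseK ⊢
  omega
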